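/- arXiv:1802.08163 — 3 statements merged into one kernel-verified Lean document; each statement's English description precedes it below -/
import Mathlib

section
/- Let z₁ < z₂ < ⋯ < z_K be real numbers with K ≥ 2 and let Π_C be the associated Cramér projection. Then for any probability measure ν on ℝ whose cumulative distribution function F_ν satisfies ∫_{−∞}^0 F_ν(x)² dx < ∞ and ∫_0^∞ (1−F_ν(x))² dx < ∞, and for every probability measure μ supported on {z₁,…,z_K}, one has ℓ₂(ν, Π_C ν) ≤ ℓ₂(ν, μ); that is, Π_C ν minimises the Cramér distance to ν over all probability measures supported on the grid {z₁,…,z_K}. -/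
open MeasureTheory Filter Set

noncomputable section

/-- The cumulative distribution function of a measure on ℝ. -/
def cdfFn (ν : Measure ℝ) (y : ℝ) : ℝ := (ν (Set.Iic y)).toReal

/-- The Cramér distance `ℓ₂` between two measures on ℝ. -/
def cramerDist (ν₁ ν₂ : Measure ℝ) : ℝ :=
  Real.sqrt (∫ x, (cdfFn ν₁ x - cdfFn ν₂ x) ^ 2)

/-- The hat functions associated with the grid `z 0 < z 1 < ⋯ < z (K-1)`. -/
def hatFn (K : ℕ) (z : ℕ → ℝ) (i : ℕ) (x : ℝ) : ℝ :=
  if i = 0 ∧ x ≤ z 0 then 1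
  else if i = K - 1 ∧ z (K - 1) ≤ x then 1
  else if i + 1 < K ∧ z i ≤ x ∧ x ≤ z (i + 1) then (z (i + 1) - x) / (z (i + 1) - z i)
  else if 0 < i ∧ z (i - 1) ≤ x ∧ x ≤ z i then (x - z (i - 1)) / (z i - z (i - 1))
  else 0

/-- The Cramér projection onto the grid `z 0 < z 1 < ⋯ < z (K-1)`. -/
def cramerProj (K : ℕ) (z : ℕ → ℝ) (ν : Measure ℝ) : Measure ℝ :=
  ∑ i ∈ Finset.range K, (ENNReal.ofReal (∫ w, hatFn K z i w ∂ν)) • Measure.dirac (z i)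

/-- The distributional Bellman operator. -/
def bellmanOp {X A : Type} [Fintype X] [Fintype A] [MeasurableSpace X] [MeasurableSpace A]
    (γ : ℝ) (p : X × A → Measure (ℝ × X)) (pol : X → Measure A)
    (η : X × A → Measure ℝ) (xa : X × A) : Measure ℝ :=
  (p xa).bind (fun rx' => ∑ a' : A, (pol rx'.2 {a'}) • (η (rx'.2, a')).map (fun t => rx'.1 + γ * t))

/-- The supremum-Cramér metric between return distribution functions. -/
def supCramer {X A : Type} [Fintype X] [Fintype A] (η μ : X × A → Measure ℝ) : ℝ :=
  ⨆ xa : X × A, cramerDist (η xa) (μ xa)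

/-- Square-integrable tails of the CDF. -/
def sqIntTails (ν : Measure ℝ) : Prop :=
  IntegrableOn (fun x => (cdfFn ν x) ^ 2) (Set.Iic 0) ∧
  IntegrableOn (fun x => (1 - cdfFn ν x) ^ 2) (Set.Ici 0)

lemma z_lt {K : ℕ} {z : ℕ → ℝ} (hz : ∀ i, i + 1 < K → z i < z (i + 1)) :
    ∀ j i, i < j → j < K → z i < z j := by
  intro j
  induction j with
  | zero => intro i h; omega
  | succ n ih =>
    intro i h hK
    rcases Nat.lt_succ_iff_lt_or_eq.mp h with h | rfl
    · exact (ih i h (by omega)).trans (hz n hK)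
    · exact hz _ hK

lemma z_le {K : ℕ} {z : ℕ → ℝ} (hz : ∀ i, i + 1 < K → z i < z (i + 1))
    (j i : ℕ) (h : i ≤ j) (hj : j < K) : z i ≤ z j := by
  rcases h.lt_or_eq with h | rfl
  · exact (z_lt hz j i h hj).le
  · exact le_rfl

lemma z_locate (z : ℕ → ℝ) (x : ℝ) (h0 : z 0 ≤ x) :
    ∀ n, x < z n → ∃ i, i < n ∧ z i ≤ x ∧ x < z (i + 1) := by
  intro n
  induction n with
  | zero => intro h; linarith
  | succ n ih =>
    intro h
    by_cases h' : x < z n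
    · obtain ⟨i, hi, h⟩ := ih h'
      exact ⟨i, by omega, h⟩
    · exact ⟨n, by omega, not_lt.mp h', h⟩

def rampFn (a b w : ℝ) : ℝ := max (b - max a w) 0 / (b - a)

lemma rampFn_left {a b w : ℝ} (hab : a < b) (h : w ≤ a) : rampFn a b w = 1 := by
  unfold rampFn
  rw [max_eq_left h, max_eq_left (by linarith), div_self (by linarith)]

lemma rampFn_mid {a b w : ℝ} (h : a ≤ w) (h' : w ≤ b) :
    rampFn a b w = (b - w) / (b - a) := by
  unfold rampFn
  rw [max_eq_right h, max_eq_left (by linarith)]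

lemma rampFn_right {a b w : ℝ} (hab : a < b) (h : b ≤ w) : rampFn a b w = 0 := by
  unfold rampFn
  rw [max_eq_right (hab.le.trans h), max_eq_right (by linarith), zero_div]

lemma hat_zero {K : ℕ} (hK : 2 ≤ K) {z : ℕ → ℝ} (hz : ∀ i, i + 1 < K → z i < z (i + 1))
    (w : ℝ) : hatFn K z 0 w = rampFn (z 0) (z 1) w := by
  have h01 := hz 0 (by omega)
  have hk : ¬ (0 = K - 1) := by omega
  have hk' : 0 + 1 < K := by omega
  simp only [zero_add] at *
  unfold hatFn
  by_cases h : w ≤ z 0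
  · simp [h, rampFn_left h01 h]
  · by_cases h' : w ≤ z 1
    · rw [rampFn_mid (not_le.mp h).le h']
      simp [h, h', hk, hk', (not_le.mp h).le]
    · rw [rampFn_right h01 (not_le.mp h').le]
      simp [h, h', hk]

lemma hat_succ {K : ℕ} {z : ℕ → ℝ} (hz : ∀ i, i + 1 < K → z i < z (i + 1))
    (i : ℕ) (hi : i + 2 < K) (w : ℝ) :
    rampFn (z i) (z (i + 1)) w + hatFn K z (i + 1) w = rampFn (z (i + 1)) (z (i + 2)) w := by
  have h01 := hz i (by omega)
  have h12 : z (i + 1) < z (i + 2) := hz (i + 1) (by omega)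
  have hk : ¬ (i + 1 = K - 1) := by omega
  have hk' : i + 1 + 1 < K := by omega
  unfold hatFn
  rcases le_or_gt w (z i) with h | h
  · rw [rampFn_left h01 h, rampFn_left h12 (by linarith)]
    rcases h.lt_or_eq with h | rfl
    · simp [hk, not_le.mpr h, not_le.mpr (h.trans h01)]
    · simp [hk, not_le.mpr h01]
  rcases lt_or_ge w (z (i + 1)) with h' | h'
  · rw [rampFn_mid h.le h'.le, rampFn_left h12 h'.le]
    simp [hk, not_le.mpr h', h.le, h'.le]
    have : z (i + 1) - z i ≠ 0 := by linarith
    field_simp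
    ring
  rw [rampFn_right h01 h']
  rcases le_or_gt w (z (i + 2)) with h2 | h2
  · rw [rampFn_mid h' h2]
    simp [hk, hk', h', h2]
  · rw [rampFn_right h12 h2.le]
    simp [hk, not_le.mpr h2, not_le.mpr (h12.trans h2)]

lemma hat_last {K : ℕ} {z : ℕ → ℝ} (hz : ∀ i, i + 1 < K → z i < z (i + 1))
    (i : ℕ) (hi : i + 2 = K) (w : ℝ) :
    rampFn (z i) (z (i + 1)) w + hatFn K z (i + 1) w = 1 := by
  subst hi
  have h01 := hz i (by omega)
  unfold hatFn
  rcases le_or_gt w (z i) with h | h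
  · rw [rampFn_left h01 h]
    rcases h.lt_or_eq with h | rfl
    · simp [not_le.mpr h, not_le.mpr (h.trans h01)]
    · simp [not_le.mpr h01]
  rcases lt_or_ge w (z (i + 1)) with h' | h'
  · rw [rampFn_mid h.le h'.le]
    simp [not_le.mpr h', h.le, h'.le]
    have : z (i + 1) - z i ≠ 0 := by linarith
    field_simp
    ring
  rw [rampFn_right h01 h']
  simp [h']

lemma hat_sum {K : ℕ} (hK : 2 ≤ K) {z : ℕ → ℝ} (hz : ∀ i, i + 1 < K → z i < z (i + 1))
    (w : ℝ) : ∀ i, i + 1 < K →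
    ∑ j ∈ Finset.range (i + 1), hatFn K z j w = rampFn (z i) (z (i + 1)) w := by
  intro i
  induction i with
  | zero => intro _; simpa using hat_zero hK hz w
  | succ n ih =>
    intro h
    rw [Finset.sum_range_succ, ih (by omega), hat_succ hz n h]

lemma hat_sum_all {K : ℕ} (hK : 2 ≤ K) {z : ℕ → ℝ} (hz : ∀ i, i + 1 < K → z i < z (i + 1))
    (w : ℝ) : ∑ j ∈ Finset.range K, hatFn K z j w = 1 := by
  obtain ⟨n, rfl⟩ : ∃ n, K = n + 2 := ⟨K - 2, by omega⟩
  rw [Finset.sum_range_succ, hat_sum hK hz w n (by omega), hat_last hz n rfl]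

lemma hat_nonneg {K : ℕ} {z : ℕ → ℝ} (i : ℕ) (w : ℝ) : 0 ≤ hatFn K z i w := by
  unfold hatFn
  split_ifs with h1 h2 h3 h4
  · norm_num
  · norm_num
  · exact div_nonneg (by linarith [h3.2.2]) (by linarith [h3.2.2, h3.2.1])
  · exact div_nonneg (by linarith [h4.2.1]) (by linarith [h4.2.2, h4.2.1])
  · exact le_rfl

lemma hat_le_one {K : ℕ} {z : ℕ → ℝ} (i : ℕ) (w : ℝ) : hatFn K z i w ≤ 1 := by
  unfold hatFn
  split_ifs with h1 h2 h3 h4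
  · norm_num
  · norm_num
  · exact div_le_one_of_le₀ (by linarith [h3.2.1]) (by linarith [h3.2.2, h3.2.1])
  · exact div_le_one_of_le₀ (by linarith [h4.2.2]) (by linarith [h4.2.2, h4.2.1])
  · norm_num

lemma hat_meas (K : ℕ) (z : ℕ → ℝ) (i : ℕ) : Measurable (hatFn K z i) := by
  unfold hatFn
  refine Measurable.ite ?_ measurable_const (Measurable.ite ?_ measurable_const
    (Measurable.ite ?_ (by fun_prop) (Measurable.ite ?_ (by fun_prop) measurable_const)))
  · exact (MeasurableSet.const _).inter measurableSet_Iic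
  · exact (MeasurableSet.const _).inter measurableSet_Ici
  · exact (MeasurableSet.const _).inter (measurableSet_Ici.inter measurableSet_Iic)
  · exact (MeasurableSet.const _).inter (measurableSet_Ici.inter measurableSet_Iic)

lemma hat_int (K : ℕ) (z : ℕ → ℝ) (i : ℕ) (ν : Measure ℝ) [IsProbabilityMeasure ν] :
    Integrable (hatFn K z i) ν := by
  refine Integrable.of_bound (hat_meas K z i).aestronglyMeasurable 1 (ae_of_all _ fun w => ?_)
  rw [Real.norm_eq_abs, abs_of_nonneg (hat_nonneg i w)]
  exact hat_le_one i w

lemma cdf_proj (K : ℕ) (z : ℕ → ℝ) (ν : Measure ℝ) [IsProbabilityMeasure ν] (x : ℝ) :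
    cdfFn (cramerProj K z ν) x =
      ∑ i ∈ Finset.range K, if z i ≤ x then ∫ w, hatFn K z i w ∂ν else 0 := by
  unfold cdfFn cramerProj
  rw [Measure.finsetSum_apply, ENNReal.toReal_sum]
  · refine Finset.sum_congr rfl fun i _ => ?_
    have : 0 ≤ ∫ w, hatFn K z i w ∂ν := integral_nonneg (fun w => hat_nonneg i w)
    by_cases h : z i ≤ x <;> simp [h, Set.indicator, this]
  · intro i _
    by_cases h : z i ≤ x <;> simp [h, Set.indicator]

lemma ramp_integral (a b : ℝ) (hab : a < b) (ν : Measure ℝ) [IsProbabilityMeasure ν] :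
    (∫ w, rampFn a b w ∂ν) * (b - a) = ∫ x in Ico a b, cdfFn ν x := by
  have hS : MeasurableSet {p : ℝ × ℝ | p.1 ≤ p.2} := measurableSet_le measurable_fst measurable_snd
  have hsw := integral_integral_swap (μ := ν) (ν := (volume : Measure ℝ).restrict (Ico a b))
    (f := fun w x => Set.indicator {p : ℝ × ℝ | p.1 ≤ p.2} (fun _ => (1 : ℝ)) (w, x)) (by
      exact (integrable_const (1 : ℝ)).indicator hS)
  rw [← integral_mul_const]
  have h1 : ∀ w, ∫ x in Ico a b, Set.indicator {p : ℝ × ℝ | p.1 ≤ p.2} (fun _ => (1 : ℝ)) (w, x)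
      = rampFn a b w * (b - a) := by
    intro w
    have : (fun x => Set.indicator {p : ℝ × ℝ | p.1 ≤ p.2} (fun _ => (1 : ℝ)) (w, x))
        = Set.indicator (Ici w) (fun _ => (1 : ℝ)) := by
      ext x; simp [Set.indicator]
    rw [this, integral_indicator measurableSet_Ici, Measure.restrict_restrict measurableSet_Ici]
    have h2 : Ici w ∩ Ico a b = Ico (max a w) b := by
      ext x; simp only [mem_inter_iff, mem_Ici, mem_Ico, max_le_iff]; tauto
    rw [h2, rampFn, div_mul_cancel₀ _ (by linarith)]
    simp
  have h2 : ∀ x, ∫ w, Set.indicator {p : ℝ × ℝ | p.1 ≤ p.2} (fun _ => (1 : ℝ)) (w, x) ∂ν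
      = cdfFn ν x := by
    intro x
    have : (fun w => Set.indicator {p : ℝ × ℝ | p.1 ≤ p.2} (fun _ => (1 : ℝ)) (w, x))
        = Set.indicator (Iic x) (fun _ => (1 : ℝ)) := by
      ext x; simp [Set.indicator]
    rw [this, integral_indicator measurableSet_Iic]
    simp [cdfFn, Measure.real]
  simp only [h1, h2] at hsw
  exact hsw

lemma cdf_meas (ν : Measure ℝ) [IsProbabilityMeasure ν] : Measurable (cdfFn ν) := by
  refine Monotone.measurable fun x y h => ?_
  exact ENNReal.toReal_mono (measure_ne_top _ _) (measure_mono (Iic_subset_Iic.mpr h))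

lemma cdf_intOn (ν : Measure ℝ) [IsProbabilityMeasure ν] (a b : ℝ) :
    IntegrableOn (cdfFn ν) (Ico a b) := by
  refine Integrable.of_bound (cdf_meas ν).aestronglyMeasurable 1 (ae_of_all _ fun w => ?_)
  rw [Real.norm_eq_abs, cdfFn, abs_of_nonneg ENNReal.toReal_nonneg]
  exact ENNReal.toReal_le_of_le_ofReal zero_le_one (by simpa using prob_le_one)

/-- The Cramér projection minimises the Cramér distance to ν over all
probability measures supported on the grid. -/
theorem cramerProj_isMinimizer
    (K : ℕ) (hK : 2 ≤ K) (z : ℕ → ℝ) (hz : ∀ i, i + 1 < K → z i < z (i + 1))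
    (ν : Measure ℝ) [IsProbabilityMeasure ν] (hν : sqIntTails ν)
    (μ : Measure ℝ) [IsProbabilityMeasure μ] (hμ : μ {w | ∃ i < K, w = z i}ᶜ = 0) :
    cramerDist ν (cramerProj K z ν) ≤ cramerDist ν μ := by
  have hlt := z_lt hz
  have hle := z_le hz
  -- values of the projected cdf
  have hG0 : ∀ x, x < z 0 → cdfFn (cramerProj K z ν) x = 0 := by
    intro x hx
    rw [cdf_proj]
    refine Finset.sum_eq_zero fun i hi => ?_
    rw [if_neg]
    have := hle i 0 (by omega) (Finset.mem_range.mp hi)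
    linarith
  have hG1 : ∀ x, z (K - 1) ≤ x → cdfFn (cramerProj K z ν) x = 1 := by
    intro x hx
    rw [cdf_proj]
    have : ∀ i ∈ Finset.range K, (if z i ≤ x then ∫ w, hatFn K z i w ∂ν else 0)
        = ∫ w, hatFn K z i w ∂ν := by
      intro i hi
      rw [if_pos]
      have := Finset.mem_range.mp hi
      exact (hle (K - 1) i (by omega) (by omega)).trans hx
    rw [Finset.sum_congr rfl this, ← integral_finsetSum _ (fun i _ => hat_int K z i ν)]
    simp [hat_sum_all hK hz]
  let g : ℕ → ℝ := fun i => ∫ w, rampFn (z i) (z (i + 1)) w ∂ν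
  have hGi : ∀ i, i + 1 < K → ∀ x, z i ≤ x → x < z (i + 1) →
      cdfFn (cramerProj K z ν) x = g i := by
    intro i hi x hx hx'
    rw [cdf_proj, ← Finset.sum_filter]
    have : (Finset.range K).filter (fun j => z j ≤ x) = Finset.range (i + 1) := by
      ext j
      simp only [Finset.mem_filter, Finset.mem_range]
      constructor
      · rintro ⟨h1, h2⟩
        by_contra h
        have := hle j (i + 1) (by omega) h1
        linarith
      · intro h
        exact ⟨by omega, (hle i j (by omega) (by omega)).trans hx⟩
    rw [this, ← integral_finsetSum _ (fun i _ => hat_int K z i ν)]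
    exact integral_congr_ae (ae_of_all _ fun w => hat_sum hK hz w i hi)
  -- values of the cdf of μ
  have hH0 : ∀ x, x < z 0 → cdfFn μ x = 0 := by
    intro x hx
    have : μ (Iic x) = 0 := by
      refine measure_mono_null ?_ hμ
      rintro w hw ⟨i, hi, rfl⟩
      have := hle i 0 (by omega) hi
      have h2 : z i ≤ x := hw
      linarith
    simp [cdfFn, this]
  have hH1 : ∀ x, z (K - 1) ≤ x → cdfFn μ x = 1 := by
    intro x hx
    have : μ (Iic x)ᶜ = 0 := by
      refine measure_mono_null ?_ hμ
      rintro w hw ⟨i, hi, rfl⟩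
      exact hw ((hle (K - 1) i (by omega) (by omega)).trans hx)
    rw [prob_compl_eq_zero_iff measurableSet_Iic] at this
    simp [cdfFn, this]
  have hHi : ∀ i, i + 1 < K → ∀ x, z i ≤ x → x < z (i + 1) →
      cdfFn μ x = cdfFn μ (z i) := by
    intro i hi x hx hx'
    have h0 : μ (Ioc (z i) x) = 0 := by
      refine measure_mono_null ?_ hμ
      rintro w hw ⟨j, hj, rfl⟩
      rcases Nat.lt_or_ge i j with h | h
      · have := hle j (i + 1) (by omega) hj
        linarith [hw.2]
      · have := hle i j h (by omega)
        linarith [hw.1]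
    unfold cdfFn
    congr 1
    refine le_antisymm ?_ (measure_mono (Iic_subset_Iic.mpr hx))
    rw [← Iic_union_Ioc_eq_Iic hx]
    refine (measure_union_le _ _).trans ?_
    rw [h0, add_zero]
  set F := cdfFn ν with hF
  set G := cdfFn (cramerProj K z ν) with hG
  set H := cdfFn μ with hH
  -- the difference identity
  let c : ℕ → ℝ := fun i => g i - H (z i)
  let E : ℕ → ℝ → ℝ := fun i => (Ico (z i) (z (i + 1))).indicator
    (fun x => 2 * c i * (F x - g i) + c i ^ 2)
  have key : ∀ x, (F x - H x) ^ 2 = (F x - G x) ^ 2 + ∑ i ∈ Finset.range (K - 1), E i x := by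
    intro x
    by_cases h0 : x < z 0
    · rw [hG0 x h0, hH0 x h0, Finset.sum_eq_zero, add_zero]
      intro i hi
      have hi := Finset.mem_range.mp hi
      refine indicator_of_notMem ?_ _
      intro h
      have := hle i 0 (by omega) (by omega)
      linarith [h.1]
    by_cases h1 : z (K - 1) ≤ x
    · rw [hG1 x h1, hH1 x h1, Finset.sum_eq_zero, add_zero]
      intro i hi
      have hi := Finset.mem_range.mp hi
      refine indicator_of_notMem ?_ _
      intro h
      have := hle (K - 1) (i + 1) (by omega) (by omega)
      linarith [h.2]
    obtain ⟨i, hi, hx, hx'⟩ := z_locate z x (not_lt.mp h0) (K - 1) (not_le.mp h1)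
    rw [hGi i (by omega) x hx hx', hHi i (by omega) x hx hx',
      Finset.sum_eq_single_of_mem i (Finset.mem_range.mpr hi)]
    · have : E i x = 2 * c i * (F x - g i) + c i ^ 2 := indicator_of_mem (mem_Ico.mpr (And.intro hx hx')) _
      rw [this]
      simp only [c]
      ring
    · intro j hj hji
      have hj := Finset.mem_range.mp hj
      refine indicator_of_notMem ?_ _
      intro h
      rcases Nat.lt_or_gt_of_ne hji with h' | h'
      · have := hle i (j + 1) (by omega) (by omega)
        linarith [h.2]
      · have := hle j (i + 1) (by omega) (by omega)
        linarith [h.1]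
  have hcon : ∀ i (r : ℝ), IntegrableOn (fun _ : ℝ => r) (Ico (z i) (z (i + 1))) :=
    fun i r => integrableOn_const (by simp)
  have hEint : ∀ i, Integrable (E i) := by
    intro i
    refine IntegrableOn.integrable_indicator ?_ measurableSet_Ico
    exact (((cdf_intOn ν _ _).sub (hcon i _)).const_mul _).add (hcon i _)
  have hEnn : ∀ i ∈ Finset.range (K - 1), 0 ≤ ∫ x, E i x := by
    intro i hi
    have hi := Finset.mem_range.mp hi
    have hzi := hz i (by omega)
    have hA : IntegrableOn (fun x => 2 * c i * (F x - g i)) (Ico (z i) (z (i + 1))) :=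
      ((cdf_intOn ν _ _).sub (hcon i _)).const_mul _
    simp only [E]
    rw [integral_indicator measurableSet_Ico,
      integral_add hA (hcon i _),
      integral_const_mul, integral_sub (cdf_intOn ν _ _) (hcon i _),
      ← ramp_integral _ _ hzi ν]
    simp only [setIntegral_const, Real.volume_real_Ico_of_le hzi.le, smul_eq_mul]
    have : (∫ w, rampFn (z i) (z (i + 1)) w ∂ν) = g i := rfl
    rw [this, mul_comm (g i), sub_self, mul_zero, zero_add]
    exact mul_nonneg (by linarith) (sq_nonneg _)
  unfold cramerDist
  refine Real.sqrt_le_sqrt ?_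
  change ∫ x, (F x - G x) ^ 2 ≤ ∫ x, (F x - H x) ^ 2
  by_cases hi : Integrable (fun x => (F x - G x) ^ 2)
  · simp_rw [key]
    rw [integral_add hi (integrable_finsetSum _ fun i _ => hEint i),
      integral_finsetSum _ fun i _ => hEint i]
    linarith [Finset.sum_nonneg hEnn]
  · rw [integral_undef hi]
    exact integral_nonneg fun x => sq_nonneg _

end
end

section
/- Let r ∈ ℝ and γ ∈ (0,1). For the affine map f_{r,γ} : ℝ → ℝ given by f_{r,γ}(t) = r + γt, and for any two probability measures ν₁, ν₂ on ℝ, the Cramér distance satisfies ℓ₂²((f_{r,γ})_# ν₁, (f_{r,γ})_# ν₂) = γ · ℓ₂²(ν₁, ν₂), where (f_{r,γ})_# ν denotes the pushforward of ν under f_{r,γ}. -/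
open MeasureTheory Filter Set

noncomputable section

/-- The Cramér distance scales by √γ under the affine pushforward
`f_{r,γ}(t) = r + γ t`. -/
theorem cramerDist_affine_pushforward
    (r : ℝ) (γ : ℝ) (hγ0 : 0 < γ) (hγ1 : γ < 1)
    (ν₁ ν₂ : Measure ℝ) [IsProbabilityMeasure ν₁] [IsProbabilityMeasure ν₂] :
    (cramerDist (Measure.map (fun t => r + γ * t) ν₁)
        (Measure.map (fun t => r + γ * t) ν₂)) ^ 2
      = γ * (cramerDist ν₁ ν₂) ^ 2 := by
  have hc : ∀ (ν : Measure ℝ) (x : ℝ),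
      cdfFn (Measure.map (fun t => r + γ * t) ν) x = cdfFn ν ((x - r) / γ) := by
    intro ν x
    unfold cdfFn
    rw [Measure.map_apply (by fun_prop) measurableSet_Iic]
    congr 2
    ext t
    simp only [Set.mem_preimage, Set.mem_Iic]
    rw [le_div_iff₀ hγ0]
    constructor <;> intro h <;> linarith
  unfold cramerDist
  rw [Real.sq_sqrt (integral_nonneg fun x => sq_nonneg _),
    Real.sq_sqrt (integral_nonneg fun x => sq_nonneg _)]
  simp only [hc]
  rw [integral_sub_right_eq_self
      (fun x => (cdfFn ν₁ (x / γ) - cdfFn ν₂ (x / γ)) ^ 2) r,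
    Measure.integral_comp_div (fun x => (cdfFn ν₁ x - cdfFn ν₂ x) ^ 2) γ,
    abs_of_pos hγ0, smul_eq_mul]

end
end

section
/- (The Cramér projection with p > 1 Wasserstein expands distances: counterexample underlying Lemma 1.) Let p > 1, take the grid z₁ = 0, z₂ = 1, and consider ν₁ = δ_{1/4}, ν₂ = δ_{3/4}, so Π_C ν₁ = (3/4)δ₀ + (1/4)δ₁ and Π_C ν₂ = (1/4)δ₀ + (3/4)δ₁. Then: (i) d_p(ν₁, ν₂) = 1/2, i.e. there is a coupling λ of ν₁ and ν₂ with (∫ |x−y|^p dλ)^{1/p} = 1/2 and every coupling has (∫ |x−y|^p dλ)^{1/p} ≥ 1/2; (ii) every coupling λ' of Π_C ν₁ and Π_C ν₂ satisfies (∫ |x−y|^p dλ')^{1/p} ≥ 2^{−1/p}; and (iii) 2^{−1/p} > 1/2. Hence Π_C is not a non-expansion, and the projected Bellman operator Π_C T^π is in general not a contraction, in d_p for p > 1. -/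
open MeasureTheory Filter Set

noncomputable section

theorem aux_hat0 (x : ℝ) (h0 : 0 < x) (h1 : x < 1) :
    hatFn 2 (fun i => if i = 0 then (0 : ℝ) else 1) 0 x = 1 - x := by
  simp [hatFn, h0.not_ge, h0.le, h1.le]

theorem aux_hat1 (x : ℝ) (h0 : 0 < x) (h1 : x < 1) :
    hatFn 2 (fun i => if i = 0 then (0 : ℝ) else 1) 1 x = x := by
  simp [hatFn, h1.not_ge, h0.le, h1.le]

theorem aux_proj (x : ℝ) (h0 : 0 < x) (h1 : x < 1) :
    cramerProj 2 (fun i => if i = 0 then (0 : ℝ) else 1) (Measure.dirac x)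
      = ENNReal.ofReal (1 - x) • Measure.dirac (0 : ℝ)
        + ENNReal.ofReal x • Measure.dirac (1 : ℝ) := by
  simp only [cramerProj, Finset.sum_range_succ, Finset.sum_range_zero, integral_dirac,
    aux_hat0 x h0 h1, aux_hat1 x h0 h1]
  simp

theorem aux_int (a b : ℝ) :
    Integrable (fun x : ℝ => x) (ENNReal.ofReal a • Measure.dirac (0 : ℝ)
        + ENNReal.ofReal b • Measure.dirac (1 : ℝ)) := by
  refine Integrable.add_measure (Integrable.smul_measure ?_ ENNReal.ofReal_ne_top)
    (Integrable.smul_measure ?_ ENNReal.ofReal_ne_top)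
  · exact integrable_dirac (by simp)
  · exact integrable_dirac (by simp)

theorem aux_val (a b : ℝ) (hb : 0 ≤ b) :
    ∫ x : ℝ, x ∂(ENNReal.ofReal a • Measure.dirac (0 : ℝ)
        + ENNReal.ofReal b • Measure.dirac (1 : ℝ)) = b := by
  have h := aux_int a b
  rw [integrable_add_measure] at h
  rw [integral_add_measure h.1 h.2, integral_smul_measure, integral_smul_measure]
  simp [hb]

theorem aux_ae (a b : ℝ) :
    ∀ᵐ x : ℝ ∂(ENNReal.ofReal a • Measure.dirac (0 : ℝ)
        + ENNReal.ofReal b • Measure.dirac (1 : ℝ)), x = 0 ∨ x = 1 := by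
  rw [ae_add_measure_iff]
  constructor
  · apply Measure.ae_smul_measure
    rw [ae_dirac_eq]; exact Or.inl rfl
  · apply Measure.ae_smul_measure
    rw [ae_dirac_eq]; exact Or.inr rfl

theorem aux_dirac (l : Measure (ℝ × ℝ)) [IsProbabilityMeasure l] (p : ℝ) (hp : 1 < p)
    (h1 : l.map Prod.fst = Measure.dirac (1 / 4 : ℝ))
    (h2 : l.map Prod.snd = Measure.dirac (3 / 4 : ℝ)) :
    (∫ q : ℝ × ℝ, |q.1 - q.2| ^ p ∂l) ^ (1 / p) = 1 / 2 := by
  have e1 : ∀ᵐ q ∂l, q.1 = 1 / 4 := by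
    apply ae_of_ae_map (p := fun x : ℝ => x = 1 / 4) measurable_fst.aemeasurable
    rw [h1, ae_dirac_eq]; exact rfl
  have e2 : ∀ᵐ q ∂l, q.2 = 3 / 4 := by
    apply ae_of_ae_map (p := fun x : ℝ => x = 3 / 4) measurable_snd.aemeasurable
    rw [h2, ae_dirac_eq]; exact rfl
  have e : (fun q : ℝ × ℝ => |q.1 - q.2| ^ p) =ᵐ[l] fun _ => (1 / 2 : ℝ) ^ p := by
    filter_upwards [e1, e2] with q a b
    rw [a, b, show |(1 / 4 : ℝ) - 3 / 4| = 1 / 2 by norm_num [abs_of_neg]]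
  rw [integral_congr_ae e, integral_const, probReal_univ, one_smul,
    ← Real.rpow_mul (by norm_num), mul_one_div_cancel (by positivity), Real.rpow_one]

theorem aux_low (l : Measure (ℝ × ℝ)) (p a b c d : ℝ) (hp : 1 < p)
    (hb : 0 ≤ b) (hd : 0 ≤ d)
    (h1 : l.map Prod.fst = ENNReal.ofReal a • Measure.dirac (0 : ℝ)
        + ENNReal.ofReal b • Measure.dirac (1 : ℝ))
    (h2 : l.map Prod.snd = ENNReal.ofReal c • Measure.dirac (0 : ℝ)
        + ENNReal.ofReal d • Measure.dirac (1 : ℝ)) :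
    d - b ≤ ∫ q : ℝ × ℝ, |q.1 - q.2| ^ p ∂l := by
  have e1 : ∀ᵐ q ∂l, q.1 = 0 ∨ q.1 = 1 := by
    apply ae_of_ae_map (p := fun x : ℝ => x = 0 ∨ x = 1) measurable_fst.aemeasurable
    rw [h1]; exact aux_ae a b
  have e2 : ∀ᵐ q ∂l, q.2 = 0 ∨ q.2 = 1 := by
    apply ae_of_ae_map (p := fun x : ℝ => x = 0 ∨ x = 1) measurable_snd.aemeasurable
    rw [h2]; exact aux_ae c d
  have e : (fun q : ℝ × ℝ => |q.1 - q.2| ^ p) =ᵐ[l] fun q => |q.1 - q.2| := by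
    have hp0 : p ≠ 0 := by positivity
    filter_upwards [e1, e2] with q a b
    rcases a with a | a <;> rcases b with b | b <;> simp [a, b, hp0]
  have i1 : Integrable (fun q : ℝ × ℝ => q.1) l := by
    have h := aux_int a b
    rw [← h1] at h
    exact h.comp_measurable measurable_fst
  have i2 : Integrable (fun q : ℝ × ℝ => q.2) l := by
    have h := aux_int c d
    rw [← h2] at h
    exact h.comp_measurable measurable_snd
  have v1 : ∫ q : ℝ × ℝ, q.1 ∂l = b := by
    rw [← aux_val a b hb, ← h1, integral_map measurable_fst.aemeasurable]
    exact aestronglyMeasurable_id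
  have v2 : ∫ q : ℝ × ℝ, q.2 ∂l = d := by
    rw [← aux_val c d hd, ← h2, integral_map measurable_snd.aemeasurable]
    exact aestronglyMeasurable_id
  rw [integral_congr_ae e, ← v1, ← v2, ← integral_sub i2 i1]
  refine integral_mono (i2.sub i1) (i1.sub i2).abs fun q => ?_
  rw [← neg_sub]; exact neg_le_abs _

/-- The Cramér projection expands p-Wasserstein distances for p > 1:
the counterexample on the grid z₁ = 0 < z₂ = 1 with ν₁ = δ_{1/4}, ν₂ = δ_{3/4}. -/
theorem cramerProj_wasserstein_expansion
    (p : ℝ) (hp : 1 < p) :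
    -- the projections have the claimed explicit form
    (cramerProj 2 (fun i => if i = 0 then (0 : ℝ) else 1) (Measure.dirac (1 / 4 : ℝ))
        = ENNReal.ofReal (3 / 4) • Measure.dirac (0 : ℝ)
          + ENNReal.ofReal (1 / 4) • Measure.dirac (1 : ℝ)) ∧
    (cramerProj 2 (fun i => if i = 0 then (0 : ℝ) else 1) (Measure.dirac (3 / 4 : ℝ))
        = ENNReal.ofReal (1 / 4) • Measure.dirac (0 : ℝ)
          + ENNReal.ofReal (3 / 4) • Measure.dirac (1 : ℝ)) ∧
    -- (i) d_p(ν₁, ν₂) = 1/2 : attained by some coupling, and a lower bound over all couplings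
    (∃ l : Measure (ℝ × ℝ), IsProbabilityMeasure l ∧
        l.map Prod.fst = Measure.dirac (1 / 4 : ℝ) ∧
        l.map Prod.snd = Measure.dirac (3 / 4 : ℝ) ∧
        (∫ q : ℝ × ℝ, |q.1 - q.2| ^ p ∂l) ^ (1 / p) = 1 / 2) ∧
    (∀ l : Measure (ℝ × ℝ), IsProbabilityMeasure l →
        l.map Prod.fst = Measure.dirac (1 / 4 : ℝ) →
        l.map Prod.snd = Measure.dirac (3 / 4 : ℝ) →
        (1 : ℝ) / 2 ≤ (∫ q : ℝ × ℝ, |q.1 - q.2| ^ p ∂l) ^ (1 / p)) ∧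
    -- (ii) every coupling of the projected measures has p-cost at least 2^{-1/p}
    (∀ l' : Measure (ℝ × ℝ), IsProbabilityMeasure l' →
        l'.map Prod.fst
          = cramerProj 2 (fun i => if i = 0 then (0 : ℝ) else 1) (Measure.dirac (1 / 4 : ℝ)) →
        l'.map Prod.snd
          = cramerProj 2 (fun i => if i = 0 then (0 : ℝ) else 1) (Measure.dirac (3 / 4 : ℝ)) →
        (2 : ℝ) ^ (-(1 / p)) ≤ (∫ q : ℝ × ℝ, |q.1 - q.2| ^ p ∂l') ^ (1 / p)) ∧
    -- (iii) 2^{-1/p} > 1/2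
    ((1 : ℝ) / 2 < (2 : ℝ) ^ (-(1 / p))) := by
  have P1 := aux_proj (1 / 4) (by norm_num) (by norm_num)
  have P2 := aux_proj (3 / 4) (by norm_num) (by norm_num)
  rw [show (1 : ℝ) - 1 / 4 = 3 / 4 by norm_num] at P1
  rw [show (1 : ℝ) - 3 / 4 = 1 / 4 by norm_num] at P2
  refine ⟨P1, P2, ⟨Measure.dirac (1 / 4, 3 / 4), inferInstance, ?_, ?_, ?_⟩, ?_, ?_, ?_⟩
  · exact Measure.map_dirac' measurable_fst _
  · exact Measure.map_dirac' measurable_snd _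
  · exact aux_dirac _ p hp (by exact Measure.map_dirac' measurable_fst _)
      (by exact Measure.map_dirac' measurable_snd _)
  · intro l hl h1 h2
    exact (aux_dirac l p hp h1 h2).ge
  · intro l hl h1 h2
    rw [P1] at h1
    rw [P2] at h2
    have h := aux_low l p _ _ _ _ hp (by norm_num) (by norm_num) h1 h2
    rw [Real.rpow_neg (by norm_num), ← Real.inv_rpow (by norm_num)]
    refine Real.rpow_le_rpow (by norm_num) (le_trans (by norm_num) h) (by positivity)
  · have h : (2 : ℝ) ^ (-1 : ℝ) < 2 ^ (-(1 / p)) := by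
      apply Real.rpow_lt_rpow_of_exponent_lt (by norm_num)
      have : 1 / p < 1 := by rw [div_lt_one (by positivity)]; exact hp
      linarith
    rwa [Real.rpow_neg_one, ← one_div] at h

end
end
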